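/- Let L be a lattice with a least element ⊥ and let a ∈ L be an atom of L that is also a neutral element of L. Then an element x ∈ L is a standard element of L if and only if x ⊔ a is a standard element of L. -/

import Mathlib

/-- An element `x` of a lattice `L` is neutral if for all `y, z ∈ L` one has
`(x ⊔ y) ⊓ (y ⊔ z) ⊓ (z ⊔ x) = (x ⊓ y) ⊔ (y ⊓ z) ⊔ (z ⊓ x)`. -/
def IsNeutralElement {L : Type*} [Lattice L] (x : L) : Prop :=
  ∀ y z : L, (x ⊔ y) ⊓ (y ⊔ z) ⊓ (z ⊔ x) = (x ⊓ y) ⊔ (y ⊓ z) ⊔ (z ⊓ x)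

def IsStandardElement {L : Type*} [Lattice L] (x : L) : Prop :=
  ∀ y z : L, (x ⊔ y) ⊓ z = (x ⊓ z) ⊔ (y ⊓ z)

/-!
For a neutral element `a`, the map `y ↦ (y ⊓ a, y ⊔ a)` embeds `L` as a sublattice of the product
of the intervals below and above `a`, so an inequality in `L` may be checked after taking meets and
after taking joins with `a`. Hence `x` is standard as soon as `x ⊓ a` and `x ⊔ a` are. If `a` is an
atom, then `x ⊓ a` is `⊥` or `a`, and both are standard.
-/

section Lattice

variable {L : Type*} [Lattice L] {a x y z : L}

namespace IsStandardElement

theorem of_le (h : ∀ y z : L, (x ⊔ y) ⊓ z ≤ (x ⊓ z) ⊔ (y ⊓ z)) : IsStandardElement x :=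
  fun y z => (h y z).antisymm <|
    sup_le (inf_le_inf_right z le_sup_left) (inf_le_inf_right z le_sup_right)

theorem bot [OrderBot L] : IsStandardElement (⊥ : L) := fun y z => by
  rw [bot_sup_eq, bot_inf_eq, bot_sup_eq]

theorem sup (hx : IsStandardElement x) (hy : IsStandardElement y) :
    IsStandardElement (x ⊔ y) := fun z w => by
  rw [sup_assoc, hx, hy, hx, sup_assoc]

end IsStandardElement

namespace IsNeutralElement

theorem toDual (ha : IsNeutralElement a) : IsNeutralElement (OrderDual.toDual a) :=
  fun y z => (ha y.ofDual z.ofDual).symm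

theorem le_of_inf_le_of_le_sup (ha : IsNeutralElement a) (h_inf : a ⊓ y ≤ z) (h_sup : y ≤ a ⊔ z) :
    y ≤ z :=
  calc
    y ≤ (a ⊔ y) ⊓ (y ⊔ z) ⊓ (z ⊔ a) :=
      le_inf (le_inf le_sup_right le_sup_left) (h_sup.trans_eq (sup_comm a z))
    _ = (a ⊓ y) ⊔ (y ⊓ z) ⊔ (z ⊓ a) := ha y z
    _ ≤ z := sup_le (sup_le h_inf inf_le_right) inf_le_left

theorem sup_inf_le_assoc (ha : IsNeutralElement a) (y z : L) : (a ⊔ y) ⊓ z ≤ a ⊔ (y ⊓ z) :=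
  calc
    (a ⊔ y) ⊓ z ≤ (a ⊔ y) ⊓ (y ⊔ z) ⊓ (z ⊔ a) :=
      le_inf (inf_le_inf_left _ le_sup_right) (inf_le_right.trans le_sup_left)
    _ = (a ⊓ y) ⊔ (y ⊓ z) ⊔ (z ⊓ a) := ha y z
    _ ≤ a ⊔ (y ⊓ z) :=
      sup_le (sup_le_sup_right inf_le_left _) (inf_le_right.trans le_sup_left)

theorem sup_inf_left (ha : IsNeutralElement a) (y z : L) : a ⊔ (y ⊓ z) = (a ⊔ y) ⊓ (a ⊔ z) := by
  refine le_antisymm sup_inf_le ?_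
  calc
    (a ⊔ y) ⊓ (a ⊔ z) ≤ a ⊔ (y ⊓ (a ⊔ z)) := ha.sup_inf_le_assoc y (a ⊔ z)
    _ = a ⊔ ((a ⊔ z) ⊓ y) := by rw [inf_comm]
    _ ≤ a ⊔ (z ⊓ y) := sup_le le_sup_left (ha.sup_inf_le_assoc z y)
    _ = a ⊔ (y ⊓ z) := by rw [inf_comm]

theorem inf_sup_left (ha : IsNeutralElement a) (y z : L) : a ⊓ (y ⊔ z) = (a ⊓ y) ⊔ (a ⊓ z) :=
  ha.toDual.sup_inf_left (OrderDual.toDual y) (OrderDual.toDual z)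

theorem isStandardElement (ha : IsNeutralElement a) : IsStandardElement a := by
  refine .of_le fun y z => ha.le_of_inf_le_of_le_sup ?_ ?_
  · exact (inf_le_inf_left a inf_le_right).trans le_sup_left
  · exact (ha.sup_inf_le_assoc y z).trans (sup_le_sup_left le_sup_right a)

theorem isStandardElement_of_inf_of_sup (ha : IsNeutralElement a)
    (h_inf : IsStandardElement (x ⊓ a)) (h_sup : IsStandardElement (x ⊔ a)) :
    IsStandardElement x := by
  refine .of_le fun y z => ha.le_of_inf_le_of_le_sup ?_ ?_
  · calc
      a ⊓ ((x ⊔ y) ⊓ z) = ((x ⊓ a) ⊔ (a ⊓ y)) ⊓ z := by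
        rw [← inf_assoc, ha.inf_sup_left, inf_comm a x]
      _ = (x ⊓ a ⊓ z) ⊔ (a ⊓ y ⊓ z) := h_inf _ _
      _ ≤ (x ⊓ z) ⊔ (y ⊓ z) :=
        sup_le_sup (inf_le_inf_right z inf_le_left) (inf_le_inf_right z inf_le_right)
  · calc
      (x ⊔ y) ⊓ z ≤ (x ⊔ a ⊔ y) ⊓ z := inf_le_inf_right z (sup_le_sup_right le_sup_left y)
      _ = ((a ⊔ x) ⊓ z) ⊔ (y ⊓ z) := by rw [h_sup, sup_comm x a]
      _ ≤ (a ⊔ (x ⊓ z)) ⊔ (y ⊓ z) := sup_le_sup_right (ha.sup_inf_le_assoc x z) _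
      _ = a ⊔ ((x ⊓ z) ⊔ (y ⊓ z)) := sup_assoc ..

end IsNeutralElement

theorem isStandardElement_sup_atom_iff_general (ha : IsNeutralElement a)
    (h_inf : IsStandardElement (x ⊓ a)) :
    IsStandardElement x ↔ IsStandardElement (x ⊔ a) :=
  ⟨fun hx => hx.sup ha.isStandardElement, ha.isStandardElement_of_inf_of_sup h_inf⟩

theorem IsNeutralElement.isStandardElement_inf_of_isAtom [OrderBot L] (hn : IsNeutralElement a)
    (ha : IsAtom a) (x : L) : IsStandardElement (x ⊓ a) := by
  rcases ha.le_iff.mp (inf_le_right : x ⊓ a ≤ a) with h_bot | h_atom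
  · exact h_bot ▸ .bot
  · exact h_atom.symm ▸ hn.isStandardElement

end Lattice

/-- If `a` is an atom and a neutral element of a lattice `L` with least element, then
an element `x ∈ L` is a standard element of `L` if and only if `x ⊔ a` is. -/
theorem isStandardElement_sup_atom_iff {L : Type*} [Lattice L] [OrderBot L] (a : L)
    (ha : IsAtom a) (hn : IsNeutralElement a) (x : L) :
    IsStandardElement x ↔ IsStandardElement (x ⊔ a) :=
  isStandardElement_sup_atom_iff_general hn (hn.isStandardElement_inf_of_isAtom ha x)
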